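/- Let (D_a)_{a∈Σ} be distributions on (Σ')^{n'} that are uniformly α-similar, and let E₁,...,E_k be distributions on Σ^n that are uniformly β-similar for some β ∈ [0,1]. Then the substitution products E₁ ⊛ D, ..., E_k ⊛ D are uniformly αβ-similar. -/

import Mathlib

open scoped Classical

/-- mass that the distribution `D` on strings `J → σ` gives, after projecting onto the
coordinates in `Q`, to the pattern that `f` induces on `Q`. -/
noncomputable def projMass {J σ : Type*} [Fintype J] [Fintype σ]
    (D : (J → σ) → ℝ) (Q : Finset J) (f : J → σ) : ℝ :=
  ∑ x ∈ Finset.univ.filter (fun x : J → σ => ∀ i ∈ Q, x i = f i), D x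

/-- A family of distributions on strings `J → σ` is uniformly `μ`-similar if for every set `Q`
of queried coordinates the projections onto `Q` are `μ·|Q|`-similar, i.e. for every pattern the
minimum projected mass is at least `(1 - μ·|Q|)` times the maximum projected mass. -/
def UniformlySimilar {ι J σ : Type*} [Fintype J] [Fintype σ]
    (D : ι → (J → σ) → ℝ) (μ : ℝ) : Prop :=
  ∀ (Q : Finset J) (f : J → σ) (i j : ι),
    (1 - μ * Q.card) * projMass (D i) Q f ≤ projMass (D j) Q f

/-!
Let `w t a` be the mass that `D a` gives to the queried part of block `t`, and let `c t` be its
minimum over `a`. The product `∏ t, w t (x t)` is processed one factor at a time by splitting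
`w t (x t) = c t + (w t (x t) - c t)`. The constant `c t` does not look at `x`, whereas the excess
costs one query to `x`, that is, a loss of `β`. By similarity the excess is at most an
`α * (number of queries to block t)` fraction of `w t (x t)`, so the total loss is at most
`α * β * |Q|`.
-/

/-- The substitution product `E ⊛ D`: sample `x` from `E` and replace each symbol `x t` by an
independent sample from `D (x t)`. Concatenation is encoded by indexing the result with pairs
(block, position in the block). -/
noncomputable def substProd {J J' σ σ' : Type*} [Fintype J] [DecidableEq J]
    [Fintype σ] (E : (J → σ) → ℝ) (D : σ → (J' → σ') → ℝ) (z : J × J' → σ') : ℝ :=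
  ∑ x : J → σ, E x * ∏ t : J, D (x t) (fun j => z (t, j))

/-- The positions inside block `t` that are queried by a set `Q` of queries to a concatenation of
blocks. -/
noncomputable def blockQueries {J J' : Type*} [Fintype J'] (Q : Finset (J × J')) (t : J) :
    Finset J' :=
  Finset.univ.filter fun j => (t, j) ∈ Q

section Projection

variable {J J' σ σ' : Type*} [Fintype J] [Fintype J'] [Fintype σ] [Fintype σ']

theorem sum_card_blockQueries (Q : Finset (J × J')) :
    ∑ t, (blockQueries Q t).card = Q.card := by
  simpa only [Finset.card_eq_sum_ones] using
    (Finset.sum_finset_product Q Finset.univ (blockQueries Q) (f := fun _ => 1)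
      (by simp [blockQueries])).symm

theorem projMass_nonneg {D : (J → σ) → ℝ} (hD : ∀ x, 0 ≤ D x) (Q : Finset J) (f : J → σ) :
    0 ≤ projMass D Q f :=
  Finset.sum_nonneg fun x _ => hD x

theorem sum_filter_mul_eq_projMass_mul [DecidableEq J] (D : (J → σ) → ℝ) {Q : Finset J}
    {g : (J → σ) → ℝ} (hg : DependsOn g Q) (f : J → σ) :
    ∑ x : J → σ with Q.restrict x = Q.restrict f, D x * g x = projMass D Q f * g f := by
  rw [projMass, Finset.sum_mul]
  refine Finset.sum_congr (by ext; simp [funext_iff]) fun x hx => ?_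
  rw [hg (x := x) (y := f) (by simpa using hx)]

theorem projMass_sum_mul {κ : Type*} [Fintype κ] (c : κ → ℝ) (P : κ → (J → σ) → ℝ)
    (Q : Finset J) (f : J → σ) :
    projMass (fun x => ∑ s, c s * P s x) Q f = ∑ s, c s * projMass (P s) Q f := by
  simp only [projMass, Finset.mul_sum]
  exact Finset.sum_comm

theorem projMass_prod (P : J → (J' → σ') → ℝ) (Q : Finset (J × J')) (f : J × J' → σ') :
    projMass (fun z => ∏ t, P t (fun j => z (t, j))) Q f
      = ∏ t, projMass (P t) (blockQueries Q t) (fun j => f (t, j)) := by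
  simp only [projMass]
  rw [Finset.prod_univ_sum]
  exact Finset.sum_equiv (Equiv.curry J J' σ') (by simp [blockQueries]) fun z _ => rfl

theorem projMass_substProd [DecidableEq J] (E : (J → σ) → ℝ) (D : σ → (J' → σ') → ℝ)
    (Q : Finset (J × J')) (f : J × J' → σ') :
    projMass (substProd E D) Q f
      = ∑ x, E x * ∏ t, projMass (D (x t)) (blockQueries Q t) (fun j => f (t, j)) := by
  simp only [← projMass_prod, ← projMass_sum_mul]
  rfl

end Projection

theorem sum_mul_sub_le {κ : Type*} (s : Finset κ) {F w : κ → ℝ} {c k : ℝ}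
    (hF : ∀ x ∈ s, 0 ≤ F x) (hwc : ∀ x ∈ s, (1 - k) * w x ≤ c) :
    ∑ x ∈ s, F x * (w x - c) ≤ k * ∑ x ∈ s, F x * w x := by
  rw [Finset.mul_sum]
  refine Finset.sum_le_sum fun x hx => ?_
  have F_nonneg := hF x hx
  linear_combination F x * hwc x hx

theorem dependsOn_insert_mul_comp_apply {J σ : Type*} [DecidableEq J] {g : (J → σ) → ℝ}
    {S : Finset J} (hg : DependsOn g S) (a : J) (v : σ → ℝ) :
    DependsOn (fun x => g x * v (x a)) (insert a S : Finset J) := by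
  intro x y hxy
  have eq_on_S : ∀ t ∈ (S : Set J), x t = y t := fun t ht => hxy t (by simp_all)
  have eq_at_a : x a = y a := hxy a (by simp)
  simp only [hg eq_on_S, eq_at_a]

namespace UniformlySimilar

variable {ι J σ : Type*} [Fintype J] [DecidableEq J] [Fintype σ]
  {E : ι → (J → σ) → ℝ} {β : ℝ}

theorem mul_sum_mul_le (hE : UniformlySimilar E β) {S : Finset J} {g : (J → σ) → ℝ}
    (hg : ∀ x, 0 ≤ g x) (hgS : DependsOn g S) (i j : ι) :
    (1 - β * S.card) * ∑ x, E i x * g x ≤ ∑ x, E j x * g x := by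
  have sum_fiberwise (i : ι) := Finset.sum_fiberwise_of_maps_to (s := Finset.univ)
    (fun x _ => Finset.mem_image_of_mem S.restrict (Finset.mem_univ x))
    (fun x : J → σ => E i x * g x)
  rw [← sum_fiberwise i, ← sum_fiberwise j, Finset.mul_sum]
  refine Finset.sum_le_sum fun p hp => ?_
  obtain ⟨f, -, rfl⟩ := Finset.mem_image.1 hp
  rw [sum_filter_mul_eq_projMass_mul _ hgS, sum_filter_mul_eq_projMass_mul _ hgS, ← mul_assoc]
  exact mul_le_mul_of_nonneg_right (hE S f i j) (hg f)

theorem mul_sum_mul_prod_le_of_lower_bound (hE : UniformlySimilar E β) (hβ : 0 ≤ β) {i : ι}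
    (hE_nonneg : ∀ x, 0 ≤ E i x) {w : J → σ → ℝ} {c k : J → ℝ} (hc : ∀ t, 0 ≤ c t)
    (hcw : ∀ t a, c t ≤ w t a) (hwc : ∀ t a, (1 - k t) * w t a ≤ c t) (T : Finset J)
    {S : Finset J} {g : (J → σ) → ℝ} (hg : ∀ x, 0 ≤ g x) (hgS : DependsOn g S) (j : ι) :
    (1 - β * (S.card + ∑ t ∈ T, k t)) * ∑ x, E i x * (g x * ∏ t ∈ T, w t (x t))
      ≤ ∑ x, E j x * (g x * ∏ t ∈ T, w t (x t)) := by
  -- `g` collects the excess factors already split off, and `S` the symbols of `x` they read.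
  induction T using Finset.induction_on generalizing S g with
  | empty => simpa using hE.mul_sum_mul_le hg hgS i j
  | insert a T ha ih =>
    let total (h : (J → σ) → ℝ) (i : ι) : ℝ := ∑ x, E i x * (h x * ∏ t ∈ T, w t (x t))
    let excess (x : J → σ) : ℝ := g x * (w a (x a) - c a)
    let base (x : J → σ) : ℝ := g x * c a
    have prod_nonneg (x : J → σ) : 0 ≤ ∏ t ∈ T, w t (x t) :=
      Finset.prod_nonneg fun t _ => (hc t).trans (hcw t (x t))
    have excess_nonneg (x : J → σ) : 0 ≤ excess x := mul_nonneg (hg x) (sub_nonneg.2 (hcw a _))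
    have excess_step := ih excess_nonneg
      (dependsOn_insert_mul_comp_apply hgS a fun b => w a b - c a)
    have base_step := ih (g := base) (fun x => mul_nonneg (hg x) (hc a))
      fun x y hxy => congrArg (· * c a) (hgS hxy)
    have total_insert (i : ι) : ∑ x, E i x * (g x * ∏ t ∈ insert a T, w t (x t))
        = total excess i + total base i := by
      simp only [total, excess, base, ← Finset.sum_add_distrib, Finset.prod_insert ha]
      exact Finset.sum_congr rfl fun x _ => by ring
    have total_excess_nonneg : 0 ≤ total excess i := Finset.sum_nonneg fun x _ =>
      mul_nonneg (hE_nonneg x) (mul_nonneg (excess_nonneg x) (prod_nonneg x))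
    have total_excess_le : total excess i ≤ k a * (total excess i + total base i) := by
      convert sum_mul_sub_le Finset.univ (fun x _ => mul_nonneg (hE_nonneg x)
        (mul_nonneg (hg x) (prod_nonneg x))) (fun x _ => hwc a (x a)) using 2
      · ring
      · rw [← total_insert]
        exact Finset.sum_congr rfl fun x _ => by rw [Finset.prod_insert ha]; ring
    have card_insert_le : ((insert a S).card : ℝ) ≤ S.card + 1 := by
      exact_mod_cast Finset.card_insert_le a S
    rw [total_insert i, total_insert j, Finset.sum_insert ha]
    linear_combination excess_step + base_step + β * total_excess_le +
      β * total excess i * card_insert_le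

theorem mul_sum_mul_prod_le (hE : UniformlySimilar E β) (hβ : 0 ≤ β) {i : ι}
    (hE_nonneg : ∀ x, 0 ≤ E i x) {w : J → σ → ℝ} {k : J → ℝ} (hw : ∀ t a, 0 ≤ w t a)
    (hwk : ∀ t a b, (1 - k t) * w t a ≤ w t b) (j : ι) :
    (1 - β * ∑ t, k t) * ∑ x, E i x * ∏ t, w t (x t) ≤ ∑ x, E j x * ∏ t, w t (x t) := by
  -- For an empty alphabet the infimum is the junk value `0`, which meets all requirements.
  have min_le (t : J) (a : σ) : ⨅ b, w t b ≤ w t a := ciInf_le (Set.finite_range _).bddBelow a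
  have le_min (t : J) (a : σ) : (1 - k t) * w t a ≤ ⨅ b, w t b :=
    haveI : Nonempty σ := ⟨a⟩
    le_ciInf (hwk t a)
  simpa using hE.mul_sum_mul_prod_le_of_lower_bound hβ hE_nonneg
    (fun t => Real.iInf_nonneg (hw t)) min_le le_min Finset.univ (S := ∅) (g := fun _ => 1)
    (fun _ => zero_le_one) (fun _ _ _ => rfl) j

end UniformlySimilar

theorem stmt9_general {ι J J' σ σ' : Type*} [Fintype J] [DecidableEq J]
    [Fintype J'] [Fintype σ] [Fintype σ'] {α β : ℝ} (hβ : 0 ≤ β)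
    {D : σ → (J' → σ') → ℝ} (hD_nonneg : ∀ a z, 0 ≤ D a z)
    (hD : UniformlySimilar D α) {E : ι → (J → σ) → ℝ} (hE_nonneg : ∀ i x, 0 ≤ E i x)
    (hE : UniformlySimilar E β) :
    UniformlySimilar (fun i => substProd (E i) D) (α * β) := by
  intro Q f i j
  have loss_eq : α * β * Q.card = β * ∑ t, α * (blockQueries Q t).card := by
    rw [← Finset.mul_sum, ← Nat.cast_sum, sum_card_blockQueries]
    ring
  simp only [projMass_substProd, loss_eq]
  exact hE.mul_sum_mul_prod_le hβ (hE_nonneg i) (fun t a => projMass_nonneg (hD_nonneg a) _ _)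
    (fun t a b => hD (blockQueries Q t) (fun j => f (t, j)) a b) j

theorem stmt9 {σ σ' : Type*} [Fintype σ] [Fintype σ'] {ι : Type*} {n n' : ℕ}
    (α β : ℝ) (hα : 0 ≤ α) (hβ0 : 0 ≤ β) (hβ1 : β ≤ 1)
    (D : σ → (Fin n' → σ') → ℝ)
    (hDnn : ∀ a z, 0 ≤ D a z) (hDsum : ∀ a, ∑ z, D a z = 1)
    (hDsim : UniformlySimilar D α)
    (E : ι → (Fin n → σ) → ℝ)
    (hEnn : ∀ i x, 0 ≤ E i x) (hEsum : ∀ i, ∑ x, E i x = 1)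
    (hEsim : UniformlySimilar E β) :
    UniformlySimilar
      (fun i => fun z : Fin n × Fin n' → σ' =>
        ∑ x : Fin n → σ, E i x * ∏ t : Fin n, D (x t) (fun j => z (t, j)))
      (α * β) := by
  exact stmt9_general hβ0 hDnn hDsim hEnn hEsim
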